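/- Let q > 2 and let u : ℝ/ℤ → ℝⁿ be an embedded, regular C¹ curve with bil(u) < ∞ and [u'/|u'|]_{W^{1-1/q,q}} < ∞. Then TP(u) ≤ (1/q) · (bil u)^{2q} · ‖u'‖_{L^∞}^{2q} · [u'/|u'|]_{W^{1-1/q,q}}^q, where u'/|u'| denotes the unit tangent field x ↦ u'(x)/|u'(x)|. -/

import Mathlib

open MeasureTheory Set Filter
open scoped RealInnerProductSpace ENNReal Topology

noncomputable section

/-- The distance on the circle `ℝ/ℤ` between the points represented by `x` and `y`. -/
def circDist (x y : ℝ) : ℝ := ‖((x - y : ℝ) : AddCircle (1 : ℝ))‖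

/-- The representative of `z` modulo `1` lying in `(-1/2, 1/2]`. -/
def wrap (z : ℝ) : ℝ := 1 / 2 - Int.fract (1 / 2 - z)

/-- Squared wedge norm `|a ∧ b|² = |a|²|b|² - ⟨a,b⟩²`. -/
def wedgeSq {n : ℕ} (a b : EuclideanSpace ℝ (Fin n)) : ℝ :=
  ‖a‖ ^ 2 * ‖b‖ ^ 2 - ⟪a, b⟫ ^ 2

/-- Wedge inner product `⟨a∧b, c∧d⟩ = ⟨a,c⟩⟨b,d⟩ - ⟨a,d⟩⟨b,c⟩`. -/
def wedgeInner {n : ℕ} (a b c d : EuclideanSpace ℝ (Fin n)) : ℝ :=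
  ⟪a, c⟫ * ⟪b, d⟫ - ⟪a, d⟫ * ⟪b, c⟫

/-- Fundamental domain for double integrals over `(ℝ/ℤ)²`. -/
def unitSq : Set (ℝ × ℝ) := Ioc (0 : ℝ) 1 ×ˢ Ioc (0 : ℝ) 1

/-- The tangent-point functional `TP` (extended-real-valued). -/
def TPe {n : ℕ} (q : ℝ) (u : ℝ → EuclideanSpace ℝ (Fin n)) : ℝ≥0∞ :=
  ENNReal.ofReal (1 / q) *
    ∫⁻ p in unitSq, ENNReal.ofReal
      (wedgeSq (deriv u p.2) (u p.1 - u p.2) ^ (q / 2) / ‖u p.1 - u p.2‖ ^ (2 * q))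

/-- The tangent-point functional `TP` (real-valued). -/
def TPr {n : ℕ} (q : ℝ) (u : ℝ → EuclideanSpace ℝ (Fin n)) : ℝ := (TPe q u).toReal

/-- The `q`-th power of the Sobolev–Slobodeckii seminorm `[f]_{W^{s,q}}` on `ℝ/ℤ`. -/
def sobSemPow {n : ℕ} (s q : ℝ) (f : ℝ → EuclideanSpace ℝ (Fin n)) : ℝ≥0∞ :=
  ∫⁻ p in unitSq, ENNReal.ofReal (‖f p.1 - f p.2‖ ^ q / circDist p.1 p.2 ^ (1 + s * q))

/-- The `W^{s,q}`-norm `‖f‖_{L^q} + [f]_{W^{s,q}}`. -/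
def Wnorm {n : ℕ} (s q : ℝ) (f : ℝ → EuclideanSpace ℝ (Fin n)) : ℝ :=
  (∫ x in Ioc (0 : ℝ) 1, ‖f x‖ ^ q) ^ (1 / q) + (sobSemPow s q f).toReal ^ (1 / q)

/-- The bi-Lipschitz constant `bil(u) = sup_{x ≢ y} |x-y|_{ℝ/ℤ}/|u(x)-u(y)|`. -/
def bil {n : ℕ} (u : ℝ → EuclideanSpace ℝ (Fin n)) : ℝ≥0∞ :=
  ⨆ (x : ℝ) (y : ℝ) (_ : circDist x y ≠ 0),
    ENNReal.ofReal (circDist x y) / ENNReal.ofReal ‖u x - u y‖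

/-- The `L^∞`-norm of the derivative of `u`. -/
def linfD {n : ℕ} (u : ℝ → EuclideanSpace ℝ (Fin n)) : ℝ≥0∞ :=
  ⨆ x : ℝ, (‖deriv u x‖₊ : ℝ≥0∞)

/-- A periodic curve is embedded if it is injective on the circle `ℝ/ℤ`. -/
def Embedded {n : ℕ} (u : ℝ → EuclideanSpace ℝ (Fin n)) : Prop :=
  ∀ x y : ℝ, u x = u y → ((x : AddCircle (1 : ℝ)) = (y : AddCircle (1 : ℝ)))

/-- A curve is regular if `min_{ℝ/ℤ} |u'| > 0`. -/
def Regular {n : ℕ} (u : ℝ → EuclideanSpace ℝ (Fin n)) : Prop :=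
  0 < ⨅ x : ℝ, ‖deriv u x‖

/-- Orthogonal projection of `b` onto the orthogonal complement of `ℝ a`. -/
def projPerp {n : ℕ} (a b : EuclideanSpace ℝ (Fin n)) : EuclideanSpace ℝ (Fin n) :=
  b - (⟪b, a⟫ / ‖a‖ ^ 2) • a

/-- The classical tangent-point functional (extended-real-valued). -/
def TPcle {n : ℕ} (q : ℝ) (u : ℝ → EuclideanSpace ℝ (Fin n)) : ℝ≥0∞ :=
  ENNReal.ofReal (1 / q) *
    ∫⁻ p in unitSq, ENNReal.ofReal
      (‖projPerp (deriv u p.2) (u p.1 - u p.2)‖ ^ q / ‖u p.1 - u p.2‖ ^ (2 * q) *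
        (‖deriv u p.1‖ * ‖deriv u p.2‖))

/-- The integrand of the functional `M(u; v, w)`. -/
def Mintegrand {n : ℕ} (q : ℝ) (u v w : ℝ → EuclideanSpace ℝ (Fin n)) (p : ℝ × ℝ) : ℝ :=
  wedgeSq (deriv u p.2) (u p.1 - u p.2) ^ ((q - 2) / 2) / ‖u p.1 - u p.2‖ ^ (2 * q) *
    wedgeInner (deriv u p.2) (u p.1 - u p.2) (deriv v p.2)
      (w p.1 - w p.2 - wrap (p.1 - p.2) • deriv w p.2)

/-- The functional `M(u; v, w)` appearing in the first variation of `TP`. -/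
def Mfun {n : ℕ} (q : ℝ) (u v w : ℝ → EuclideanSpace ℝ (Fin n)) : ℝ :=
  ∫ p in unitSq, Mintegrand q u v w p

/-- The integrand of the functional `A(u; v, w)`. -/
def Aintegrand {n : ℕ} (q : ℝ) (u v w : ℝ → EuclideanSpace ℝ (Fin n)) (p : ℝ × ℝ) : ℝ :=
  wedgeSq (deriv u p.2) (u p.1 - u p.2) ^ (q / 2) / ‖u p.1 - u p.2‖ ^ (2 * q + 2) *
    ⟪v p.1 - v p.2, w p.1 - w p.2⟫

/-- The functional `A(u; v, w)` appearing in the first variation of `TP`. -/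
def Afun {n : ℕ} (q : ℝ) (u v w : ℝ → EuclideanSpace ℝ (Fin n)) : ℝ :=
  ∫ p in unitSq, Aintegrand q u v w p

/-- The first variation `δTP(u)[w] = M(u;u,w) + M(u;w,u) - 2A(u;u,w)`. -/
def deltaTP {n : ℕ} (q : ℝ) (u w : ℝ → EuclideanSpace ℝ (Fin n)) : ℝ :=
  Mfun q u u w + Mfun q u w u - 2 * Afun q u u w

/-- The `H²` inner product on periodic curves. -/
def H2inner (v w : ℝ → EuclideanSpace ℝ (Fin 3)) : ℝ :=
  ∫ x in Ioc (0 : ℝ) 1,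
    (⟪v x, w x⟫ + ⟪deriv v x, deriv w x⟫ + ⟪deriv (deriv v) x, deriv (deriv w) x⟫)

/-- The total energy `E(u) = (κ/2)∫|u''|² + ρ TP(u)`. -/
def energyE (κ ρ q : ℝ) (u : ℝ → EuclideanSpace ℝ (Fin 3)) : ℝ :=
  κ / 2 * (∫ x in Ioc (0 : ℝ) 1, ‖deriv (deriv u) x‖ ^ 2) + ρ * TPr q u

/-! The component of the chord `u x - u y` along `u' y` does not contribute to the wedge product.
After subtracting a suitable multiple of the unit tangent `τ y`, what remains of
`u x - u y = ∫ |u'| τ` is `∫ |u'| (τ - τ y)`. Hence, with `x = y + z`, the integrand of `TP` is at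
most `(bil u)^{2q} ‖u'‖_∞^{2q}` times the `q`-th power of the mean of `|τ - τ y|` over `[y, y + z]`,
divided by `|z|^q`. A Hardy inequality in `z` removes the mean. -/

section Wedge

variable {n : ℕ}

theorem wedgeSq_nonneg (a b : EuclideanSpace ℝ (Fin n)) : 0 ≤ wedgeSq a b := by
  rw [wedgeSq, ← mul_pow, sub_nonneg, ← sq_abs ⟪a, b⟫]
  exact pow_le_pow_left₀ (abs_nonneg _) (abs_real_inner_le_norm a b) 2

theorem wedgeSq_le (a b : EuclideanSpace ℝ (Fin n)) : wedgeSq a b ≤ (‖a‖ * ‖b‖) ^ 2 := by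
  rw [wedgeSq, mul_pow]
  exact sub_le_self _ (sq_nonneg _)

theorem wedgeSq_sub_smul (a b : EuclideanSpace ℝ (Fin n)) (c : ℝ) :
    wedgeSq a (b - c • a) = wedgeSq a b := by
  simp only [wedgeSq, norm_sub_sq_real, inner_sub_right, real_inner_smul_right,
    real_inner_self_eq_norm_sq, norm_smul, Real.norm_eq_abs, mul_pow, sq_abs, real_inner_comm a b]
  ring

theorem continuous_wedgeSq :
    Continuous fun p : EuclideanSpace ℝ (Fin n) × EuclideanSpace ℝ (Fin n) => wedgeSq p.1 p.2 := by
  unfold wedgeSq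
  fun_prop

theorem wedgeSq_rpow_half_le {q : ℝ} (hq : 0 ≤ q) (a b : EuclideanSpace ℝ (Fin n)) :
    wedgeSq a b ^ (q / 2) ≤ (‖a‖ * ‖b‖) ^ q := by
  calc wedgeSq a b ^ (q / 2) ≤ ((‖a‖ * ‖b‖) ^ 2) ^ (q / 2) :=
        Real.rpow_le_rpow (wedgeSq_nonneg a b) (wedgeSq_le a b) (by positivity)
    _ = (‖a‖ * ‖b‖) ^ q := by
        rw [← Real.rpow_natCast_mul (by positivity), Nat.cast_ofNat, mul_div_cancel₀ q two_ne_zero]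

theorem ofReal_wedgeSq_div_le {q : ℝ} (hq : 0 ≤ q) {b : EuclideanSpace ℝ (Fin n)} (hb : b ≠ 0)
    (a : EuclideanSpace ℝ (Fin n)) (c : ℝ) :
    ENNReal.ofReal (wedgeSq a b ^ (q / 2) / ‖b‖ ^ (2 * q)) ≤
      (‖a‖ₑ * ‖b - c • a‖ₑ / ‖b‖ₑ ^ 2) ^ q := by
  have hb₀ : 0 < ‖b‖ ^ 2 := by positivity
  calc ENNReal.ofReal (wedgeSq a b ^ (q / 2) / ‖b‖ ^ (2 * q))
      ≤ ENNReal.ofReal ((‖a‖ * ‖b - c • a‖ / ‖b‖ ^ 2) ^ q) := by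
        rw [Real.div_rpow (by positivity) hb₀.le, ← Real.rpow_natCast_mul (norm_nonneg b),
          Nat.cast_ofNat, ← wedgeSq_sub_smul a b c]
        gcongr
        exact wedgeSq_rpow_half_le hq a _
    _ = (‖a‖ₑ * ‖b - c • a‖ₑ / ‖b‖ₑ ^ 2) ^ q := by
        rw [← ENNReal.ofReal_rpow_of_nonneg (by positivity) hq, ENNReal.ofReal_div_of_pos hb₀,
          ENNReal.ofReal_mul (norm_nonneg a), ENNReal.ofReal_pow (norm_nonneg b)]
        simp only [ofReal_norm]

end Wedge

section LipschitzCurves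

variable {E : Type*} [NormedAddCommGroup E] [NormedSpace ℝ E] {K : NNReal} {u : ℝ → E}

theorem periodic_deriv {c : ℝ} (hu : Function.Periodic u c) : Function.Periodic (deriv u) c :=
  fun x => by rw [← deriv_comp_add_const, hu.funext]

theorem exists_lipschitzWith_of_periodic {c : ℝ} (hu : ContDiff ℝ 1 u) (hc : c ≠ 0)
    (hper : Function.Periodic u c) : ∃ K, LipschitzWith K u := by
  obtain ⟨C, hC⟩ := ((periodic_deriv hper).isBounded_of_continuous hc
    hu.continuous_deriv_one).exists_norm_le
  exact ⟨C.toNNReal, lipschitzWith_of_nnnorm_deriv_le (hu.differentiable one_ne_zero)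
    fun x => NNReal.le_toNNReal_of_coe_le (hC _ (mem_range_self x))⟩

/-- The unit tangent field `u'/|u'|` of a curve. It vanishes wherever `deriv u` does, in particular
wherever `u` is not differentiable. -/
def unitTangent (u : ℝ → E) (x : ℝ) : E := ‖deriv u x‖⁻¹ • deriv u x

theorem norm_deriv_smul_unitTangent (u : ℝ → E) (x : ℝ) :
    ‖deriv u x‖ • unitTangent u x = deriv u x := by
  rw [unitTangent, smul_smul]
  rcases eq_or_ne (deriv u x) 0 with h | h
  · simp [h]
  · rw [mul_inv_cancel₀ (norm_ne_zero_iff.2 h), one_smul]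

theorem periodic_unitTangent {c : ℝ} (hu : Function.Periodic u c) :
    Function.Periodic (unitTangent u) c := fun x => by
  simp only [unitTangent, periodic_deriv hu x]

theorem stronglyMeasurable_unitTangent [CompleteSpace E] (u : ℝ → E) :
    StronglyMeasurable (unitTangent u) :=
  (stronglyMeasurable_deriv u).norm.inv₀.smul (stronglyMeasurable_deriv u)

theorem intervalIntegrable_deriv_of_lipschitzWith [CompleteSpace E] (hu : LipschitzWith K u)
    (a b : ℝ) : IntervalIntegrable (deriv u) volume a b :=
  (intervalIntegrable_const (c := (K : ℝ))).mono_fun'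
    (stronglyMeasurable_deriv u).aestronglyMeasurable
    (Eventually.of_forall fun _ => norm_deriv_le_of_lipschitz hu)

variable [FiniteDimensional ℝ E]

theorem integral_deriv_eq_sub_of_lipschitzWith (hu : LipschitzWith K u) (a b : ℝ) :
    ∫ x in a..b, deriv u x = u b - u a := by
  refine SeparatingDual.eq_iff_forall_dual_eq.2 fun (ℓ : E →L[ℝ] ℝ) => ?_
  have hℓu : LipschitzWith (‖ℓ‖₊ * K) (ℓ ∘ u) := ℓ.lipschitz.comp hu
  have hderiv : ∀ᵐ x, ℓ (deriv u x) = deriv (ℓ ∘ u) x :=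
    hu.ae_differentiableAt_real.mono fun x hx =>
      (ℓ.hasFDerivAt.comp_hasDerivAt x hx.hasDerivAt).deriv.symm
  calc ℓ (∫ x in a..b, deriv u x) = ∫ x in a..b, ℓ (deriv u x) :=
        (ℓ.intervalIntegral_comp_comm (intervalIntegrable_deriv_of_lipschitzWith hu a b)).symm
    _ = ∫ x in a..b, deriv (ℓ ∘ u) x :=
        intervalIntegral.integral_congr_ae (hderiv.mono fun _ h _ => h)
    _ = ℓ (u b) - ℓ (u a) :=
        (hℓu.lipschitzOnWith.absolutelyContinuousOnInterval).integral_deriv_eq_sub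
    _ = ℓ (u b - u a) := (map_sub ℓ _ _).symm

theorem chord_sub_smul_unitTangent (hu : LipschitzWith K u) (y w : ℝ) :
    u w - u y - (∫ x in y..w, ‖deriv u x‖) • unitTangent u y =
      ∫ x in y..w, ‖deriv u x‖ • (unitTangent u x - unitTangent u y) := by
  have hint := intervalIntegrable_deriv_of_lipschitzWith hu y w
  simp only [smul_sub, norm_deriv_smul_unitTangent]
  rw [intervalIntegral.integral_sub hint ⟨hint.norm.1.smul_const _, hint.norm.2.smul_const _⟩,
    integral_deriv_eq_sub_of_lipschitzWith hu, intervalIntegral.integral_smul_const]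

theorem enorm_chord_sub_smul_unitTangent_le (hu : LipschitzWith K u) {L : ℝ≥0∞}
    (hL : ∀ x, ‖deriv u x‖ₑ ≤ L) (y z : ℝ) :
    ‖u (y + z) - u y - (∫ x in y..y + z, ‖deriv u x‖) • unitTangent u y‖ₑ ≤
      ‖z‖ₑ * (L * ∫⁻ t in Ioc (0 : ℝ) 1, ‖unitTangent u (y + z * t) - unitTangent u y‖ₑ) := by
  have hosc : StronglyMeasurable fun t => unitTangent u (y + z * t) - unitTangent u y :=
    ((stronglyMeasurable_unitTangent u).comp_measurable (by fun_prop)).sub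
      stronglyMeasurable_const
  have hscale := intervalIntegral.smul_integral_comp_add_mul (a := 0) (b := 1)
    (fun x => ‖deriv u x‖ • (unitTangent u x - unitTangent u y)) z y
  rw [mul_zero, add_zero, mul_one] at hscale
  rw [chord_sub_smul_unitTangent hu, ← hscale, enorm_smul,
    intervalIntegral.integral_of_le zero_le_one, ← lintegral_const_mul L hosc.enorm]
  gcongr
  refine (enorm_integral_le_lintegral_enorm _).trans (lintegral_mono fun t => ?_)
  rw [enorm_smul, enorm_norm]
  gcongr
  exact hL _

end LipschitzCurves

section Hardy

theorem lintegral_rpow_le_of_isProbabilityMeasure {α : Type*} [MeasurableSpace α] {μ : Measure α}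
    [IsProbabilityMeasure μ] {q : ℝ} (hq : 1 ≤ q) {f : α → ℝ≥0∞} (hf : AEMeasurable f μ) :
    (∫⁻ x, f x ∂μ) ^ q ≤ ∫⁻ x, f x ^ q ∂μ := by
  have h := eLpNorm'_le_eLpNorm'_of_exponent_le one_pos hq μ hf.aestronglyMeasurable
  simp only [eLpNorm', enorm_eq_self, ENNReal.rpow_one, div_one] at h
  rwa [one_div, ENNReal.le_rpow_inv_iff (by positivity)] at h

variable {S : Set ℝ}

theorem setLIntegral_mul_comp_mul_right_le (hS : StarConvex ℝ 0 S) (hSm : MeasurableSet S)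
    {f : ℝ → ℝ≥0∞} (hf : Measurable f) {t : ℝ} (ht : t ∈ Ioc (0 : ℝ) 1) :
    ∫⁻ z in S, ENNReal.ofReal t * f (z * t) ≤ ∫⁻ z in S, f z := by
  have hmem : ∀ z ∈ S, z * t ∈ S := fun z hz => by
    simpa only [smul_eq_mul, mul_comm] using starConvex_zero_iff.1 hS hz ht.1.le ht.2
  calc ∫⁻ z in S, ENNReal.ofReal t * f (z * t)
      = ∫⁻ z in S, ENNReal.ofReal t * S.indicator f (z * t) :=
        setLIntegral_congr_fun hSm fun z hz => by simp only [indicator_of_mem (hmem z hz)]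
    _ ≤ ∫⁻ z, ENNReal.ofReal t * S.indicator f (z * t) := setLIntegral_le_lintegral _ _
    _ = ∫⁻ z, S.indicator f z := by
        have hind : Measurable (S.indicator f) := hf.indicator hSm
        conv_rhs => rw [← Real.smul_map_volume_mul_right ht.1.ne']
        rw [lintegral_smul_measure, lintegral_map hind (by fun_prop),
          lintegral_const_mul _ (by fun_prop), abs_of_pos ht.1, smul_eq_mul]
    _ = ∫⁻ z in S, f z := lintegral_indicator hSm f

theorem div_enorm_rpow_le_ofReal_mul {q t : ℝ} (hq : 1 ≤ q) (ht : t ∈ Ioc (0 : ℝ) 1) (a : ℝ≥0∞)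
    (z : ℝ) : (a / ‖z‖ₑ) ^ q ≤ ENNReal.ofReal t * (a / ‖z * t‖ₑ) ^ q := by
  have ht₀ : ENNReal.ofReal t ≠ 0 := (ENNReal.ofReal_pos.2 ht.1).ne'
  calc (a / ‖z‖ₑ) ^ q = (ENNReal.ofReal t * (a / ‖z * t‖ₑ)) ^ q := by
        rw [enorm_mul, Real.enorm_of_nonneg ht.1.le, ← mul_div_assoc, mul_comm _ a,
          ENNReal.mul_div_mul_right _ _ ht₀ ENNReal.ofReal_ne_top]
    _ = ENNReal.ofReal t ^ q * (a / ‖z * t‖ₑ) ^ q :=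
        ENNReal.mul_rpow_of_nonneg _ _ (zero_le_one.trans hq)
    _ ≤ ENNReal.ofReal t * (a / ‖z * t‖ₑ) ^ q := by
        gcongr
        exact ENNReal.rpow_le_self_of_le_one (ENNReal.ofReal_le_one.2 ht.2) hq

/-- A Hardy inequality. Jensen moves the power inside the mean, and the weight then yields a factor
`t ^ q ≤ t`, which pays for the Jacobian of `z ↦ z * t`. -/
theorem setLIntegral_average_div_rpow_le (hS : StarConvex ℝ 0 S) (hSm : MeasurableSet S)
    {q : ℝ} (hq : 1 ≤ q) {f : ℝ → ℝ≥0∞} (hf : Measurable f) :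
    ∫⁻ z in S, ((∫⁻ t in Ioc (0 : ℝ) 1, f (z * t)) / ‖z‖ₑ) ^ q ≤
      ∫⁻ z in S, (f z / ‖z‖ₑ) ^ q := by
  have : IsProbabilityMeasure (volume.restrict (Ioc (0 : ℝ) 1)) := ⟨by simp⟩
  have hpoint : ∀ z, ((∫⁻ t in Ioc (0 : ℝ) 1, f (z * t)) / ‖z‖ₑ) ^ q ≤
      ∫⁻ t in Ioc (0 : ℝ) 1, ENNReal.ofReal t * (f (z * t) / ‖z * t‖ₑ) ^ q := fun z => by
    calc ((∫⁻ t in Ioc (0 : ℝ) 1, f (z * t)) / ‖z‖ₑ) ^ q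
        = (∫⁻ t in Ioc (0 : ℝ) 1, f (z * t) / ‖z‖ₑ) ^ q := by
          simp only [div_eq_mul_inv]
          rw [lintegral_mul_const _ (by fun_prop)]
      _ ≤ ∫⁻ t in Ioc (0 : ℝ) 1, (f (z * t) / ‖z‖ₑ) ^ q :=
          lintegral_rpow_le_of_isProbabilityMeasure hq (by fun_prop)
      _ ≤ ∫⁻ t in Ioc (0 : ℝ) 1, ENNReal.ofReal t * (f (z * t) / ‖z * t‖ₑ) ^ q :=
          setLIntegral_mono' measurableSet_Ioc fun t ht => div_enorm_rpow_le_ofReal_mul hq ht _ z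
  calc ∫⁻ z in S, ((∫⁻ t in Ioc (0 : ℝ) 1, f (z * t)) / ‖z‖ₑ) ^ q
      ≤ ∫⁻ z in S, ∫⁻ t in Ioc (0 : ℝ) 1, ENNReal.ofReal t * (f (z * t) / ‖z * t‖ₑ) ^ q :=
        lintegral_mono hpoint
    _ = ∫⁻ t in Ioc (0 : ℝ) 1, ∫⁻ z in S, ENNReal.ofReal t * (f (z * t) / ‖z * t‖ₑ) ^ q :=
        lintegral_lintegral_swap (by fun_prop)
    _ ≤ ∫⁻ _ in Ioc (0 : ℝ) 1, ∫⁻ z in S, (f z / ‖z‖ₑ) ^ q :=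
        setLIntegral_mono' measurableSet_Ioc fun t ht =>
          setLIntegral_mul_comp_mul_right_le hS hSm (f := fun w => (f w / ‖w‖ₑ) ^ q)
            (by fun_prop) ht
    _ = ∫⁻ z in S, (f z / ‖z‖ₑ) ^ q := by simp

end Hardy

section Circle

theorem circDist_add_left {y z : ℝ} (hz : |z| ≤ 1 / 2) : circDist (y + z) y = |z| := by
  rw [circDist, add_sub_cancel_left, AddCircle.norm_coe_eq_abs_iff 1 one_ne_zero]
  simpa using hz

theorem circDist_add_one_left (x y : ℝ) : circDist (x + 1) y = circDist x y := by
  rw [circDist, circDist, add_sub_right_comm, AddCircle.coe_add_period]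

theorem continuous_circDist : Continuous fun p : ℝ × ℝ => circDist p.1 p.2 :=
  ((AddCircle.continuous_mk' 1).comp (continuous_fst.sub continuous_snd)).norm

theorem setLIntegral_Ioc_comp_add_left_of_periodic {T : ℝ} (hT : 0 < T) {f : ℝ → ℝ≥0∞}
    (hf : Function.Periodic f T) (a b y : ℝ) :
    ∫⁻ z in Ioc a (a + T), f (y + z) = ∫⁻ x in Ioc b (b + T), f x := by
  have hpreimage : (y + ·) ⁻¹' Ioc (y + a) (y + a + T) = Ioc a (a + T) := by
    rw [preimage_const_add_Ioc, add_assoc, add_sub_cancel_left, add_sub_cancel_left]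
  calc ∫⁻ z in Ioc a (a + T), f (y + z) = ∫⁻ x in Ioc (y + a) (y + a + T), f x := by
        rw [← hpreimage, (measurePreserving_add_left volume y).setLIntegral_comp_preimage_emb
          (measurableEmbedding_addLeft y) f]
    _ = ∫⁻ x in Ioc b (b + T), f x :=
        (isAddFundamentalDomain_Ioc hT (y + a)).setLIntegral_eq
          (isAddFundamentalDomain_Ioc hT b) f hf.map_vadd_zmultiples

theorem setLIntegral_unitSq_eq {F : ℝ × ℝ → ℝ≥0∞} (hF : Measurable F)
    (hper : ∀ y, Function.Periodic (fun x => F (x, y)) 1) :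
    ∫⁻ p in unitSq, F p =
      ∫⁻ y in Ioc (0 : ℝ) 1, ∫⁻ z in Ioc (-(1 / 2) : ℝ) (1 / 2), F (y + z, y) := by
  have hshift (y : ℝ) := setLIntegral_Ioc_comp_add_left_of_periodic one_pos (hper y) (-(1 / 2)) 0 y
  have hhalf : -(1 / 2) + 1 = (1 / 2 : ℝ) := by norm_num
  simp only [zero_add, hhalf] at hshift
  rw [unitSq, Measure.volume_eq_prod, ← Measure.prod_restrict, lintegral_prod_symm' _ hF]
  exact lintegral_congr fun y => (hshift y).symm

end Circle

section TangentPoint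

variable {n : ℕ} {q : ℝ} {u : ℝ → EuclideanSpace ℝ (Fin n)}

theorem enorm_deriv_le_linfD (u : ℝ → EuclideanSpace ℝ (Fin n)) (x : ℝ) :
    ‖deriv u x‖ₑ ≤ linfD u :=
  le_iSup (fun x => (‖deriv u x‖₊ : ℝ≥0∞)) x

theorem ofReal_circDist_le_bil_mul {x y : ℝ} (h : u x ≠ u y) :
    ENNReal.ofReal (circDist x y) ≤ bil u * ‖u x - u y‖ₑ := by
  rcases eq_or_ne (circDist x y) 0 with h₀ | h₀
  · simp [h₀]
  rw [← ENNReal.div_le_iff (enorm_ne_zero.2 (sub_ne_zero.2 h)) enorm_ne_top, ← ofReal_norm]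
  exact le_iSup_of_le x (le_iSup_of_le y (le_iSup_of_le h₀ le_rfl))

/-- The integrand `|u'(y) ∧ (u(x) - u(y))|^q / |u(x) - u(y)|^{2q}` of `TP`. For `q ≠ 0`
it is `0 / 0 = 0` where `u x = u y`. -/
def tangentPointDensity (q : ℝ) (u : ℝ → EuclideanSpace ℝ (Fin n)) (x y : ℝ) : ℝ≥0∞ :=
  ENNReal.ofReal (wedgeSq (deriv u y) (u x - u y) ^ (q / 2) / ‖u x - u y‖ ^ (2 * q))

theorem measurable_tangentPointDensity (hu : Continuous u) (q : ℝ) :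
    Measurable fun p : ℝ × ℝ => tangentPointDensity q u p.1 p.2 := by
  have hum := hu.measurable
  have hwedge : Measurable fun p : ℝ × ℝ => wedgeSq (deriv u p.2) (u p.1 - u p.2) :=
    continuous_wedgeSq.measurable.comp (f := fun p : ℝ × ℝ => (deriv u p.2, u p.1 - u p.2))
      (by fun_prop)
  unfold tangentPointDensity
  fun_prop

theorem TPe_eq_of_periodic (hu : Continuous u) (hper : Function.Periodic u 1) (q : ℝ) :
    TPe q u = ENNReal.ofReal (1 / q) * ∫⁻ y in Ioc (0 : ℝ) 1,
      ∫⁻ z in Ioc (-(1 / 2) : ℝ) (1 / 2), tangentPointDensity q u (y + z) y := by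
  rw [← setLIntegral_unitSq_eq (measurable_tangentPointDensity hu q)
    fun y x => by simp only [tangentPointDensity, hper x]]
  rfl

theorem sobSemPow_eq_of_periodic (hq : 0 < q) {f : ℝ → EuclideanSpace ℝ (Fin n)}
    (hf : Measurable f) (hper : Function.Periodic f 1) :
    sobSemPow (1 - 1 / q) q f = ∫⁻ y in Ioc (0 : ℝ) 1, ∫⁻ z in Ioc (-(1 / 2) : ℝ) (1 / 2),
      (‖f (y + z) - f y‖ₑ / ‖z‖ₑ) ^ q := by
  have hexp : 1 + (1 - 1 / q) * q = q := by field_simp; ring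
  have hmeas := continuous_circDist.measurable
  rw [sobSemPow, hexp, setLIntegral_unitSq_eq (by fun_prop)
    fun y x => by simp only [hper x, circDist_add_one_left]]
  refine lintegral_congr fun y => setLIntegral_congr_fun measurableSet_Ioc fun z hz => ?_
  simp only [circDist_add_left (abs_le.2 ⟨hz.1.le, hz.2⟩)]
  rcases eq_or_ne z 0 with rfl | hz₀
  · simp [hq, hq.ne']
  · rw [← Real.div_rpow (norm_nonneg _) (abs_nonneg z),
      ← ENNReal.ofReal_rpow_of_nonneg (by positivity) hq.le,
      ENNReal.ofReal_div_of_pos (abs_pos.2 hz₀), ofReal_norm, ← Real.norm_eq_abs, ofReal_norm]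

theorem enorm_deriv_mul_chord_remainder_div_le {K : NNReal} (hu : LipschitzWith K u) {y z : ℝ}
    (hz : |z| ≤ 1 / 2) (h : u (y + z) ≠ u y) :
    ‖deriv u y‖ₑ * ‖u (y + z) - u y - (∫ x in y..y + z, ‖deriv u x‖) • unitTangent u y‖ₑ /
        ‖u (y + z) - u y‖ₑ ^ 2 ≤
      bil u ^ 2 * linfD u ^ 2 *
        ((∫⁻ t in Ioc (0 : ℝ) 1, ‖unitTangent u (y + z * t) - unitTangent u y‖ₑ) / ‖z‖ₑ) := by
  have hchord : ‖u (y + z) - u y‖ₑ ≠ 0 := enorm_ne_zero.2 (sub_ne_zero.2 h)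
  have hz₀ : ‖z‖ₑ ≠ 0 := enorm_ne_zero.2 fun hz₀ => h (by rw [hz₀, add_zero])
  have hbil : ‖z‖ₑ ≤ bil u * ‖u (y + z) - u y‖ₑ := by
    simpa only [circDist_add_left hz, ← Real.norm_eq_abs, ofReal_norm] using
      ofReal_circDist_le_bil_mul h
  set J := ∫⁻ t in Ioc (0 : ℝ) 1, ‖unitTangent u (y + z * t) - unitTangent u y‖ₑ
  rw [ENNReal.div_le_iff (pow_ne_zero 2 hchord) (ENNReal.pow_ne_top enorm_ne_top)]
  calc _ ≤ linfD u * (‖z‖ₑ * (linfD u * J)) := by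
        gcongr
        · exact enorm_deriv_le_linfD u y
        · exact enorm_chord_sub_smul_unitTangent_le hu (enorm_deriv_le_linfD u) y z
    _ = ‖z‖ₑ ^ 2 * linfD u ^ 2 * (J / ‖z‖ₑ) := by
        conv_lhs => rw [← ENNReal.mul_div_cancel (b := J) hz₀ enorm_ne_top]
        ring
    _ ≤ (bil u * ‖u (y + z) - u y‖ₑ) ^ 2 * linfD u ^ 2 * (J / ‖z‖ₑ) := by gcongr
    _ = bil u ^ 2 * linfD u ^ 2 * (J / ‖z‖ₑ) * ‖u (y + z) - u y‖ₑ ^ 2 := by ring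

theorem tangentPointDensity_le {K : NNReal} (hu : LipschitzWith K u) (hq : 0 < q) {y z : ℝ}
    (hz : |z| ≤ 1 / 2) :
    tangentPointDensity q u (y + z) y ≤ bil u ^ (2 * q) * linfD u ^ (2 * q) *
      ((∫⁻ t in Ioc (0 : ℝ) 1, ‖unitTangent u (y + z * t) - unitTangent u y‖ₑ) / ‖z‖ₑ) ^ q := by
  rcases eq_or_ne (u (y + z)) (u y) with h | h
  · simp [tangentPointDensity, h, Real.zero_rpow (mul_pos two_pos hq).ne']
  refine (ofReal_wedgeSq_div_le hq.le (sub_ne_zero.2 h) _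
    ((∫ x in y..y + z, ‖deriv u x‖) * ‖deriv u y‖⁻¹)).trans ?_
  have hsq (a : ℝ≥0∞) : a ^ (2 * q) = (a ^ 2) ^ q := by
    rw [ENNReal.rpow_mul, ENNReal.rpow_two]
  rw [hsq, hsq, ← ENNReal.mul_rpow_of_nonneg _ _ hq.le, ← ENNReal.mul_rpow_of_nonneg _ _ hq.le,
    mul_smul]
  exact ENNReal.rpow_le_rpow (enorm_deriv_mul_chord_remainder_div_le hu hz h) hq.le

theorem setLIntegral_tangentPointDensity_le {K : NNReal} (hu : LipschitzWith K u) (hq : 1 ≤ q)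
    (y : ℝ) :
    ∫⁻ z in Ioc (-(1 / 2) : ℝ) (1 / 2), tangentPointDensity q u (y + z) y ≤
      bil u ^ (2 * q) * linfD u ^ (2 * q) * ∫⁻ z in Ioc (-(1 / 2) : ℝ) (1 / 2),
        (‖unitTangent u (y + z) - unitTangent u y‖ₑ / ‖z‖ₑ) ^ q := by
  set I : Set ℝ := Ioc (-(1 / 2)) (1 / 2)
  have hstar : StarConvex ℝ 0 I := (convex_Ioc _ _).starConvex (by norm_num [I])
  have hτ := (stronglyMeasurable_unitTangent u).measurable
  calc _ ≤ ∫⁻ z in I, bil u ^ (2 * q) * linfD u ^ (2 * q) *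
        ((∫⁻ t in Ioc (0 : ℝ) 1, ‖unitTangent u (y + z * t) - unitTangent u y‖ₑ) / ‖z‖ₑ) ^ q :=
        setLIntegral_mono' measurableSet_Ioc fun z hz =>
          tangentPointDensity_le hu (zero_lt_one.trans_le hq) (abs_le.2 ⟨hz.1.le, hz.2⟩)
    _ = bil u ^ (2 * q) * linfD u ^ (2 * q) * ∫⁻ z in I,
        ((∫⁻ t in Ioc (0 : ℝ) 1, ‖unitTangent u (y + z * t) - unitTangent u y‖ₑ) / ‖z‖ₑ) ^ q :=
        lintegral_const_mul _ (by fun_prop)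
    _ ≤ bil u ^ (2 * q) * linfD u ^ (2 * q) * ∫⁻ z in I,
        (‖unitTangent u (y + z) - unitTangent u y‖ₑ / ‖z‖ₑ) ^ q := by
        refine mul_le_mul_right ?_ _
        exact setLIntegral_average_div_rpow_le hstar measurableSet_Ioc hq
          (f := fun z => ‖unitTangent u (y + z) - unitTangent u y‖ₑ) (by fun_prop)

theorem tp_energy_estimate_unit_tangent_general {n : ℕ} {q : ℝ} (hq : 1 ≤ q)
    {u : ℝ → EuclideanSpace ℝ (Fin n)} {K : NNReal} (hu : LipschitzWith K u)
    (hper : Function.Periodic u 1) :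
    TPe q u ≤ ENNReal.ofReal (1 / q) * bil u ^ (2 * q) * linfD u ^ (2 * q) *
      sobSemPow (1 - 1 / q) q (unitTangent u) := by
  have hτ : Measurable (unitTangent u) := (stronglyMeasurable_unitTangent u).measurable
  set I : Set ℝ := Ioc (-(1 / 2)) (1 / 2)
  calc TPe q u = ENNReal.ofReal (1 / q) *
        ∫⁻ y in Ioc (0 : ℝ) 1, ∫⁻ z in I, tangentPointDensity q u (y + z) y :=
        TPe_eq_of_periodic hu.continuous hper q
    _ ≤ ENNReal.ofReal (1 / q) * ∫⁻ y in Ioc (0 : ℝ) 1, bil u ^ (2 * q) * linfD u ^ (2 * q) *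
        ∫⁻ z in I, (‖unitTangent u (y + z) - unitTangent u y‖ₑ / ‖z‖ₑ) ^ q := by
        gcongr with y
        exact setLIntegral_tangentPointDensity_le hu hq y
    _ = ENNReal.ofReal (1 / q) * bil u ^ (2 * q) * linfD u ^ (2 * q) *
        sobSemPow (1 - 1 / q) q (unitTangent u) := by
        rw [lintegral_const_mul _ (by fun_prop), sobSemPow_eq_of_periodic
          (zero_lt_one.trans_le hq) hτ (periodic_unitTangent hper)]
        ring

end TangentPoint

/-- Energy estimate in terms of the unit tangent, eq. (3.4*):
`TP(u) ≤ (1/q) (bil u)^{2q} ‖u'‖_{L^∞}^{2q} [u'/|u'|]_{W^{1-1/q,q}}^q`. -/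
theorem tp_energy_estimate_unit_tangent (n : ℕ) (q : ℝ) (hq : 2 < q)
    (u : ℝ → EuclideanSpace ℝ (Fin n))
    (hC1 : ContDiff ℝ 1 u) (hper : Function.Periodic u 1)
    (hemb : Embedded u) (hreg : Regular u)
    (hbil : bil u < ⊤)
    (hsem : sobSemPow (1 - 1 / q) q (fun x => ‖deriv u x‖⁻¹ • deriv u x) < ⊤) :
    TPe q u ≤ ENNReal.ofReal (1 / q) * bil u ^ (2 * q) * linfD u ^ (2 * q) *
      sobSemPow (1 - 1 / q) q (fun x => ‖deriv u x‖⁻¹ • deriv u x) := by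
  obtain ⟨K, hu⟩ := exists_lipschitzWith_of_periodic hC1 one_ne_zero hper
  exact tp_energy_estimate_unit_tangent_general (by linarith) hu hper
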